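/- Pointwise differential inequality for the norm of a solution of the linearized flow: there exists a constant C₀ = C₀(n) with the following property. If u, h: ℝⁿ × I → (n×n skew-symmetric real matrices)ⁿ are smooth (I ⊆ ℝ an interval) and satisfy ∂_τ u_j = (Lu)_j + h_j for every j, then at every point (y, τ) where u(y, τ) ≠ 0 one has ∂_τ‖u‖_F − Δ_y‖u‖_F + (1/2)·Σ_i y_i ∂_i‖u‖_F + (1/2)‖u‖_F ≤ ‖h‖_F + (C₀/(1 + |y|²))·‖u‖_F, where ‖u‖_F² = Σ_j ‖u_j‖_F² and the derivatives of ‖u‖_F are classical. -/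

import Mathlib

open scoped BigOperators

noncomputable section

/-- Euclidean space `ℝⁿ`. -/
abbrev En (n : ℕ) := EuclideanSpace ℝ (Fin n)

/-- `n × n` real matrices, represented entrywise. -/
abbrev Mat (n : ℕ) := Fin n → Fin n → ℝ

variable {n : ℕ}

/-- Frobenius inner product `⟨A,B⟩_F = tr(AᵀB) = Σ_{μν} A_{μν} B_{μν}`. -/
def fipE (A B : Mat n) : ℝ := ∑ μ, ∑ ν, A μ ν * B μ ν

/-- Frobenius norm. -/
def fnormE (A : Mat n) : ℝ := Real.sqrt (fipE A A)

/-- Matrix commutator `[A, B] = AB − BA`, entrywise. -/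
def brkt (A B : Mat n) : Mat n := fun μ ν => ∑ k, (A μ k * B k ν - B μ k * A k ν)

/-- `A` is skew-symmetric. -/
def skewM (A : Mat n) : Prop := ∀ μ ν, A ν μ = -A μ ν

/-- Partial derivative `∂_i f` of a scalar function on `ℝⁿ`. -/
def pder (i : Fin n) (f : En n → ℝ) (y : En n) : ℝ :=
  fderiv ℝ f y (EuclideanSpace.single i 1)

/-- Euclidean Laplacian `Δf = Σ_i ∂_i ∂_i f` of a scalar function on `ℝⁿ`. -/
def lapS (f : En n → ℝ) (y : En n) : ℝ := ∑ i, pder i (fun z => pder i f z) y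

/-- Componentwise partial derivative `∂_i u` of a matrix-valued function on `ℝⁿ`. -/
def pderM (i : Fin n) (u : En n → Mat n) (y : En n) : Mat n :=
  fun μ ν => pder i (fun z => u z μ ν) y

/-- Componentwise Laplacian `Δu` of a matrix-valued function on `ℝⁿ`. -/
def lapM (u : En n → Mat n) (y : En n) : Mat n := fun μ ν => lapS (fun z => u z μ ν) y

/-- The constant `a = √(n−2)/(2√2)`. -/
def aC (n : ℕ) : ℝ := Real.sqrt ((n : ℝ) - 2) / (2 * Real.sqrt 2)

/-- The constant `b = (1/2)(6n − 12 − (n+2)√(2n−4))`. -/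
def bC (n : ℕ) : ℝ := (1 / 2) * (6 * (n : ℝ) - 12 - ((n : ℝ) + 2) * Real.sqrt (2 * (n : ℝ) - 4))

/-- `σ_i(y)`, the skew matrix with entries `(σ_i(y))^μ_ν = δ_{iν} y^μ − δ_{iμ} y^ν`. -/
def sigmaM (i : Fin n) (y : En n) : Mat n :=
  fun μ ν => (if i = ν then y μ else 0) - (if i = μ then y ν else 0)

/-- The soliton connection `W_i(y) = σ_i(y)/(a|y|² + b)`. -/
def Wc (i : Fin n) (y : En n) : Mat n :=
  fun μ ν => sigmaM i y μ ν / (aC n * ‖y‖ ^ 2 + bC n)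

/-- The curvature `F_{ij} = ∂_i W_j − ∂_j W_i + [W_i, W_j]` of the soliton connection `W`. -/
def Fc (i j : Fin n) (y : En n) : Mat n :=
  pderM i (Wc j) y - pderM j (Wc i) y + brkt (Wc i y) (Wc j y)

/-- The linearized operator `L` of the rescaled Yang–Mills de Turck flow at the soliton `W`:
`(Lu)_j = Δu_j − (1/2)Σ_i y_i ∂_i u_j − (1/2)u_j + 2Σ_i [W_i, ∂_i u_j]
  + Σ_i [W_i, [W_i, u_j]] + 2Σ_i [u_i, F_{ij}]`. -/
def Lop (u : En n → Fin n → Mat n) (y : En n) (j : Fin n) : Mat n :=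
  lapM (fun z => u z j) y
    - (1 / 2 : ℝ) • (∑ i, y i • pderM i (fun z => u z j) y)
    - (1 / 2 : ℝ) • u y j
    + (2 : ℝ) • ∑ i, brkt (Wc i y) (pderM i (fun z => u z j) y)
    + ∑ i, brkt (Wc i y) (brkt (Wc i y) (u y j))
    + (2 : ℝ) • ∑ i, brkt (u y i) (Fc i j y)

/-- Squared Frobenius norm of a tuple of matrices: `‖u‖_F² = Σ_j ‖u_j‖_F²`. -/
def tnormSq (v : Fin n → Mat n) : ℝ := ∑ j, fipE (v j) (v j)

/-- The Gaussian weight `ρ(y) = e^{−|y|²/4}`. -/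
def gauss (y : En n) : ℝ := Real.exp (-‖y‖ ^ 2 / 4)

end

section Helpers

lemma fderiv_quot {E : Type*} [NormedAddCommGroup E] [NormedSpace ℝ E] (f g : E → ℝ) (y : E)
    (f' g' : E →L[ℝ] ℝ) (hf : HasFDerivAt f f' y) (hg : HasFDerivAt g g' y) (h0 : g y ≠ 0) (e : E) :
    fderiv ℝ (fun z => f z / g z) y e = f' e / g y - f y * g' e / g y ^ 2 := by
  have h1 := hf.mul ((hasDerivAt_inv h0).comp_hasFDerivAt y hg)
  have h2 : (fun z => f z / g z) = f * ((fun x => x⁻¹) ∘ g) := by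
    funext z; simp [div_eq_mul_inv]
  rw [h2]
  refine (congrArg (fun l : E →L[ℝ] ℝ => l e) h1.fderiv).trans ?_
  simp
  field_simp
  ring

/-- Inner product of tuples of matrices. -/
noncomputable def pip {n : ℕ} (v w : Fin n → Mat n) : ℝ := ∑ j, fipE (v j) (w j)

/-- `ad` action on tuples. -/
noncomputable def adT {n : ℕ} (A : Mat n) (v : Fin n → Mat n) : Fin n → Mat n := fun j => brkt A (v j)

lemma pip_eq {n : ℕ} (v w : Fin n → Mat n) :
    pip v w = ∑ k : Fin n × Fin n × Fin n, v k.1 k.2.1 k.2.2 * w k.1 k.2.1 k.2.2 := by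
  simp [pip, fipE, Fintype.sum_prod_type]

lemma pip_comm {n : ℕ} (v w : Fin n → Mat n) : pip v w = pip w v := by
  simp only [pip_eq, mul_comm]

lemma pip_add {n : ℕ} (v w x : Fin n → Mat n) : pip v (w + x) = pip v w + pip v x := by
  simp only [pip_eq, Pi.add_apply, mul_add, Finset.sum_add_distrib]

lemma pip_sub {n : ℕ} (v w x : Fin n → Mat n) : pip v (w - x) = pip v w - pip v x := by
  simp only [pip_eq, Pi.sub_apply, mul_sub, Finset.sum_sub_distrib]

lemma pip_smul {n : ℕ} (c : ℝ) (v w : Fin n → Mat n) : pip v (c • w) = c * pip v w := by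
  simp only [pip_eq, Pi.smul_apply, smul_eq_mul, Finset.mul_sum]
  exact Finset.sum_congr rfl fun _ _ => by ring

lemma pip_sum {n : ℕ} {ι : Type*} (s : Finset ι) (v : Fin n → Mat n) (w : ι → Fin n → Mat n) :
    pip v (∑ i ∈ s, w i) = ∑ i ∈ s, pip v (w i) := by
  simp only [pip_eq, Finset.sum_apply, Finset.mul_sum]
  exact Finset.sum_comm

lemma pip_cs {n : ℕ} (v w : Fin n → Mat n) : pip v w ^ 2 ≤ pip v v * pip w w := by
  have := Finset.sum_mul_sq_le_sq_mul_sq (Finset.univ : Finset (Fin n × Fin n × Fin n))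
    (fun k => v k.1 k.2.1 k.2.2) (fun k => w k.1 k.2.1 k.2.2)
  simpa only [pip_eq, ← pow_two] using this

lemma pip_self_nonneg {n : ℕ} (v : Fin n → Mat n) : 0 ≤ pip v v := by
  rw [pip_eq]; exact Finset.sum_nonneg fun _ _ => mul_self_nonneg _

lemma pip_entry {n : ℕ} (v : Fin n → Mat n) (j μ ν : Fin n) :
    |v j μ ν| ≤ Real.sqrt (pip v v) := by
  apply Real.abs_le_sqrt
  rw [pip_eq, pow_two]
  exact Finset.single_le_sum (f := fun k : Fin n × Fin n × Fin n =>
    v k.1 k.2.1 k.2.2 * v k.1 k.2.1 k.2.2) (fun _ _ => mul_self_nonneg _)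
    (Finset.mem_univ (j, μ, ν))

lemma pip_self_pos {n : ℕ} (v : Fin n → Mat n) (hv : v ≠ 0) : 0 < pip v v := by
  rcases (pip_self_nonneg v).lt_or_eq with h | h
  · exact h
  · exfalso; apply hv
    funext j μ ν
    have := pip_entry v j μ ν
    rw [← h, Real.sqrt_zero] at this
    simpa using this

lemma fipE_brkt {n : ℕ} (A B C : Mat n) (hA : skewM A) :
    fipE B (brkt A C) = - fipE (brkt A B) C := by
  have e1 : fipE B (brkt A C) = (∑ μ, ∑ ν, ∑ k, B μ ν * (A μ k * C k ν))
      - ∑ μ, ∑ ν, ∑ k, B μ ν * (C μ k * A k ν) := by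
    simp only [fipE, brkt, Finset.mul_sum, mul_sub, Finset.sum_sub_distrib]
  have e2 : fipE (brkt A B) C = (∑ μ, ∑ ν, ∑ k, (A μ k * B k ν) * C μ ν)
      - ∑ μ, ∑ ν, ∑ k, (B μ k * A k ν) * C μ ν := by
    simp only [fipE, brkt, Finset.sum_mul, sub_mul, Finset.sum_sub_distrib]
  have h1 : (∑ μ, ∑ ν, ∑ k, B μ ν * (A μ k * C k ν))
      = - ∑ μ, ∑ ν, ∑ k, (A μ k * B k ν) * C μ ν := by
    have : ∀ f : Fin n → Fin n → Fin n → ℝ,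
        (∑ μ, ∑ ν, ∑ k, f μ ν k) = ∑ μ, ∑ ν, ∑ k, f k ν μ := by
      intro f
      calc (∑ μ, ∑ ν, ∑ k, f μ ν k) = ∑ ν, ∑ μ, ∑ k, f μ ν k := Finset.sum_comm
        _ = ∑ ν, ∑ k, ∑ μ, f μ ν k := Finset.sum_congr rfl fun _ _ => Finset.sum_comm
        _ = _ := Finset.sum_comm
    rw [this]
    simp only [← Finset.sum_neg_distrib]
    refine Finset.sum_congr rfl fun μ _ => Finset.sum_congr rfl fun ν _ =>
      Finset.sum_congr rfl fun k _ => ?_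
    rw [hA μ k]; ring
  have h2 : (∑ μ, ∑ ν, ∑ k, B μ ν * (C μ k * A k ν))
      = - ∑ μ, ∑ ν, ∑ k, (B μ k * A k ν) * C μ ν := by
    simp only [← Finset.sum_neg_distrib]
    refine Finset.sum_congr rfl fun μ _ => ?_
    rw [Finset.sum_comm]
    refine Finset.sum_congr rfl fun ν _ =>
      Finset.sum_congr rfl fun k _ => ?_
    rw [hA k ν]; ring
  rw [e1, e2, h1, h2]; ring

lemma pip_ad {n : ℕ} (A : Mat n) (hA : skewM A) (v w : Fin n → Mat n) :
    pip v (adT A w) = - pip (adT A v) w := by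
  simp only [pip, adT, ← Finset.sum_neg_distrib]
  exact Finset.sum_congr rfl fun j _ => fipE_brkt _ _ _ hA

lemma skew_Wc {n : ℕ} (i : Fin n) (y : En n) : skewM (Wc i y) := by
  intro μ ν
  simp only [Wc, sigmaM]
  ring

/-- Kato / diamagnetic pointwise inequality. -/
lemma kato_alg {n : ℕ} (A : Mat n) (hA : skewM A) (v p : Fin n → Mat n) (hv : 0 < pip v v) :
    2 * pip v (adT A p) + pip v (adT A (adT A v))
      ≤ pip p p - pip v p ^ 2 / pip v v := by
  have h0 : pip v (adT A v) = 0 := by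
    have := pip_ad A hA v v
    rw [pip_comm (adT A v)] at this
    linarith
  have h1 := pip_cs v (p + adT A v)
  rw [pip_add, h0, pip_add, pip_comm (p + _) p, pip_comm (p + _) (adT A v), pip_add, pip_add,
    pip_comm p (adT A v)] at h1
  rw [pip_ad A hA v p, pip_ad A hA v (adT A v)]
  have : pip v p ^ 2 / pip v v ≤ pip p p + 2 * pip (adT A v) p + pip (adT A v) (adT A v) := by
    rw [div_le_iff₀ hv]; nlinarith
  linarith

lemma brkt_bound {n : ℕ} (A B : Mat n) (a b : ℝ) (ha : 0 ≤ a) (hA : ∀ μ ν, |A μ ν| ≤ a)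
    (hB : ∀ μ ν, |B μ ν| ≤ b) (μ ν : Fin n) : |brkt A B μ ν| ≤ n * (2 * (a * b)) := by
  unfold brkt
  refine (Finset.abs_sum_le_sum_abs _ _).trans ?_
  refine (Finset.sum_le_card_nsmul _ _ (2 * (a * b)) ?_).trans (by simp)
  intro k _
  have h1 : |A μ k * B k ν| ≤ a * b := by
    rw [abs_mul]; exact mul_le_mul (hA _ _) (hB _ _) (abs_nonneg _) ha
  have h2 : |B μ k * A k ν| ≤ a * b := by
    rw [abs_mul, mul_comm]; exact mul_le_mul (hA _ _) (hB _ _) (abs_nonneg _) ha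
  have := abs_sub (A μ k * B k ν) (B μ k * A k ν)
  linarith

lemma R_bound {n : ℕ} (v : Fin n → Mat n) (F : Fin n → Fin n → Mat n) (φ : ℝ)
    (hF : ∀ i j μ ν, |F i j μ ν| ≤ φ) :
    pip v (fun j => ∑ i, brkt (v i) (F i j)) ≤ 2 * (n : ℝ) ^ 5 * φ * pip v v := by
  set N := Real.sqrt (pip v v) with hN
  have hNN : N * N = pip v v := Real.mul_self_sqrt (pip_self_nonneg v)
  have hN0 : 0 ≤ N := Real.sqrt_nonneg _
  have hR : ∀ j μ ν, |(∑ i, brkt (v i) (F i j)) μ ν| ≤ n * (n * (2 * (N * φ))) := by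
    intro j μ ν
    rw [Finset.sum_apply, Finset.sum_apply]
    refine (Finset.abs_sum_le_sum_abs _ _).trans ?_
    refine (Finset.sum_le_card_nsmul _ _ (n * (2 * (N * φ))) ?_).trans (by simp)
    intro i _
    exact brkt_bound _ _ _ _ hN0 (pip_entry v i) (hF i j) μ ν
  rw [pip_eq]
  refine (Finset.sum_le_card_nsmul _ _ (N * (n * (n * (2 * (N * φ))))) ?_).trans ?_
  · intro k _
    refine (le_abs_self _).trans ?_
    rw [abs_mul]
    exact mul_le_mul (pip_entry v _ _ _) (hR _ _ _) (abs_nonneg _) hN0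
  · simp only [Finset.card_univ, Fintype.card_prod, Fintype.card_fin, nsmul_eq_mul]
    rw [← hNN]; push_cast; apply le_of_eq; ring

lemma aC_pos {n : ℕ} (hn : 5 ≤ n) : 0 < aC n := by
  have : (5 : ℝ) ≤ n := by exact_mod_cast hn
  unfold aC
  have h : 0 < Real.sqrt ((n : ℝ) - 2) := Real.sqrt_pos.2 (by linarith)
  positivity

lemma bC_pos {n : ℕ} (hn : 5 ≤ n) (hn' : n ≤ 9) : 0 < bC n := by
  unfold bC
  have h5 : (5 : ℝ) ≤ n := by exact_mod_cast hn
  have : Real.sqrt (2 * (n : ℝ) - 4) < (6 * (n : ℝ) - 12) / (n + 2) := by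
    rw [Real.sqrt_lt' (by apply div_pos <;> linarith), div_pow, lt_div_iff₀ (by positivity)]
    interval_cases n <;> norm_num
  rw [lt_div_iff₀ (by linarith)] at this
  linarith

lemma coord_le {n : ℕ} (y : En n) (i : Fin n) : |y i| ≤ ‖y‖ := by
  simpa using PiLp.norm_apply_le y i

lemma sigma_bound {n : ℕ} (i : Fin n) (y : En n) (μ ν : Fin n) :
    |sigmaM i y μ ν| ≤ 2 * ‖y‖ := by
  unfold sigmaM
  have h1 := coord_le y μ
  have h2 := coord_le y ν
  have h0 := norm_nonneg y
  refine (abs_sub _ _).trans ?_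
  split_ifs <;> simp <;> linarith

/-- `σ` entries as linear functionals. -/
noncomputable def sigL {n : ℕ} (i μ ν : Fin n) : En n →L[ℝ] ℝ :=
  (if i = ν then EuclideanSpace.proj μ else 0) - (if i = μ then EuclideanSpace.proj ν else 0)

lemma sigL_apply {n : ℕ} (i μ ν : Fin n) (y : En n) : sigL i μ ν y = sigmaM i y μ ν := by
  unfold sigL sigmaM
  split_ifs <;> simp

lemma pder_Wc {n : ℕ} (i j μ ν : Fin n) (y : En n) (hD : aC n * ‖y‖ ^ 2 + bC n ≠ 0) :
    pderM i (Wc j) y μ ν = sigmaM j (EuclideanSpace.single i 1) μ ν / (aC n * ‖y‖ ^ 2 + bC n)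
      - sigmaM j y μ ν * (aC n * (2 * y i)) / (aC n * ‖y‖ ^ 2 + bC n) ^ 2 := by
  have h1 : HasFDerivAt (fun z : En n => sigmaM j z μ ν) (sigL j μ ν) y := by
    have e : (fun z : En n => sigmaM j z μ ν) = sigL j μ ν :=
      funext fun z => (sigL_apply j μ ν z).symm
    rw [e]; exact (sigL j μ ν).hasFDerivAt
  have h2 : HasFDerivAt (fun z : En n => aC n * ‖z‖ ^ 2 + bC n)
      (aC n • ((2 : ℕ) • innerSL ℝ y)) y :=
    (((hasStrictFDerivAt_norm_sq y).hasFDerivAt).const_mul (aC n)).add_const _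
  unfold pderM pder
  simp only [Wc]
  rw [fderiv_quot _ _ y _ _ h1 h2 hD]
  simp [sigL_apply, EuclideanSpace.inner_single_right]

lemma Fc_bound {n : ℕ} (hn : 5 ≤ n) (hn' : n ≤ 9) :
    ∃ K : ℝ, ∀ (y : En n) (i j μ ν : Fin n), |Fc i j y μ ν| ≤ K / (1 + ‖y‖ ^ 2) := by
  have ha := aC_pos hn
  have hb := bC_pos hn hn'
  set a := aC n with haa
  set b := bC n with hbb
  refine ⟨(12 + 8 * n / a) / min a b, fun y i j μ ν => ?_⟩
  have hc : 0 < min a b := lt_min ha hb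
  set r := ‖y‖ with hr
  have hr0 : 0 ≤ r := norm_nonneg y
  have hD : 0 < a * r ^ 2 + b := by positivity
  set D := a * r ^ 2 + b with hDD
  have hDc : min a b * (1 + r ^ 2) ≤ D := by
    have h1 := min_le_left a b
    have h2 := min_le_right a b
    nlinarith [sq_nonneg r]
  have har : a * r ^ 2 ≤ D := by linarith
  have hW : ∀ k μ ν, |Wc k y μ ν| ≤ 2 * r / D := by
    intro k μ ν
    simp only [Wc]
    rw [abs_div, abs_of_pos (a := aC n * ‖y‖ ^ 2 + bC n) hD]
    exact div_le_div_of_nonneg_right (sigma_bound k y μ ν) hD.le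
  have hP : ∀ i j, |pderM i (Wc j) y μ ν| ≤ 6 / D := by
    intro i j
    rw [pder_Wc i j μ ν y hD.ne']
    refine (abs_sub _ _).trans ?_
    rw [abs_div, abs_div, abs_mul, abs_mul, abs_mul]
    rw [abs_of_pos (a := (aC n * ‖y‖ ^ 2 + bC n) ^ 2) (by positivity),
      abs_of_pos (a := aC n * ‖y‖ ^ 2 + bC n) hD, abs_of_pos ha]
    have s1 : |sigmaM j (EuclideanSpace.single i (1:ℝ)) μ ν| ≤ 2 := by
      simpa using sigma_bound j (EuclideanSpace.single i (1:ℝ)) μ ν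
    have s2 : |sigmaM j y μ ν| * (a * (|2| * |y i|)) ≤ 4 * D := by
      have : |sigmaM j y μ ν| * (a * (|2| * |y i|)) ≤ (2 * r) * (a * (2 * r)) := by
        rw [abs_two]
        have := sigma_bound j y μ ν
        have := coord_le y i
        gcongr
      nlinarith
    have t1 : |sigmaM j (EuclideanSpace.single i (1:ℝ)) μ ν| / D ≤ 2 / D := by gcongr
    have t2 : |sigmaM j y μ ν| * (a * (|2| * |y i|)) / D ^ 2 ≤ 4 * D / D ^ 2 := by gcongr
    have t3 : 4 * D / D ^ 2 = 4 / D := by field_simp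
    have t4 : 6 / D = 2 / D + 4 / D := by ring
    rw [t4]; linarith
  have hB : |brkt (Wc i y) (Wc j y) μ ν| ≤ (8 * n / a) / D := by
    refine (brkt_bound _ _ _ _ (by positivity) (hW i) (hW j) μ ν).trans ?_
    have : (n:ℝ) * (2 * (2 * r / D * (2 * r / D))) = (8 * n / a) * (a * r ^ 2) / D ^ 2 := by
      field_simp; ring
    rw [this]
    calc (8 * n / a) * (a * r ^ 2) / D ^ 2 ≤ (8 * n / a) * D / D ^ 2 := by gcongr
      _ = _ := by field_simp
  have hF : |Fc i j y μ ν| ≤ (12 + 8 * n / a) / D := by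
    have : Fc i j y μ ν = pderM i (Wc j) y μ ν - pderM j (Wc i) y μ ν
      + brkt (Wc i y) (Wc j y) μ ν := rfl
    rw [this]
    have q1 := abs_add_le (pderM i (Wc j) y μ ν - pderM j (Wc i) y μ ν) (brkt (Wc i y) (Wc j y) μ ν)
    have q2 := abs_sub (pderM i (Wc j) y μ ν) (pderM j (Wc i) y μ ν)
    have q3 := hP i j
    have q4 := hP j i
    have q5 : (12 + 8 * n / a) / D = 6 / D + 6 / D + (8 * n / a) / D := by ring
    rw [q5]; linarith
  refine hF.trans ?_
  rw [div_div]
  exact div_le_div_of_nonneg_left (by positivity) (by positivity) hDc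

section Deriv
variable {n : ℕ} {E : Type*} [NormedAddCommGroup E] [NormedSpace ℝ E]

lemma tnormSq_eq_pip (v : Fin n → Mat n) : tnormSq v = pip v v := rfl

lemma comp_fderiv (f : E → Fin n → Mat n) (y e : E) (hf : DifferentiableAt ℝ f y)
    (j μ ν : Fin n) : fderiv ℝ (fun z => f z j μ ν) y e = fderiv ℝ f y e j μ ν := by
  have h1 := hf.hasFDerivAt
  rw [hasFDerivAt_pi'] at h1
  have h2 := h1 j
  rw [hasFDerivAt_pi'] at h2
  have h3 := h2 μ
  rw [hasFDerivAt_pi'] at h3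
  rw [(h3 ν).fderiv]
  rfl

lemma hasFDerivAt_comp3 (f : E → Fin n → Mat n) (y : E) (f' : E →L[ℝ] (Fin n → Mat n))
    (hf : HasFDerivAt f f' y) (j μ ν : Fin n) :
    ∃ l : E →L[ℝ] ℝ, HasFDerivAt (fun z => f z j μ ν) l y ∧ ∀ e, l e = f' e j μ ν := by
  have h1 := hf
  rw [hasFDerivAt_pi'] at h1
  have h2 := h1 j
  rw [hasFDerivAt_pi'] at h2
  have h3 := h2 μ
  rw [hasFDerivAt_pi'] at h3
  exact ⟨_, h3 ν, fun e => rfl⟩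

lemma hasFDerivAt_pip (f g : E → Fin n → Mat n) (y : E) (f' g' : E →L[ℝ] (Fin n → Mat n))
    (hf : HasFDerivAt f f' y) (hg : HasFDerivAt g g' y) :
    ∃ l : E →L[ℝ] ℝ, HasFDerivAt (fun z => pip (f z) (g z)) l y ∧
      ∀ e, l e = pip (f' e) (g y) + pip (f y) (g' e) := by
  choose lf hlf hlf' using hasFDerivAt_comp3 f y f' hf
  choose lg hlg hlg' using hasFDerivAt_comp3 g y g' hg
  simp only [pip_eq]
  refine ⟨_, HasFDerivAt.fun_sum (fun k _ => (hlf k.1 k.2.1 k.2.2).mul (hlg k.1 k.2.1 k.2.2)), ?_⟩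
  intro e
  simp only [_root_.sum_apply, _root_.add_apply,
    _root_.smul_apply, smul_eq_mul, hlf', hlg', ← Finset.sum_add_distrib]
  exact Finset.sum_congr rfl fun _ _ => by ring

lemma fderiv_norm (f : E → Fin n → Mat n) (y : E) (f' : E →L[ℝ] (Fin n → Mat n))
    (hf : HasFDerivAt f f' y) (h0 : f y ≠ 0) :
    ∃ l : E →L[ℝ] ℝ, HasFDerivAt (fun z => Real.sqrt (tnormSq (f z))) l y ∧
      ∀ e, l e = pip (f y) (f' e) / Real.sqrt (tnormSq (f y)) := by
  obtain ⟨l, hl, hl'⟩ := hasFDerivAt_pip f f y f' f' hf hf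
  have hp := pip_self_pos _ h0
  refine ⟨_, hl.sqrt hp.ne', fun e => ?_⟩
  simp only [_root_.smul_apply, smul_eq_mul, hl', tnormSq_eq_pip]
  rw [pip_comm (f' e)]
  have := Real.sqrt_pos.2 hp
  field_simp
  ring

lemma fderiv_norm2 (f : E → Fin n → Mat n) (y e : E) (hf : ContDiff ℝ 2 f) (h0 : f y ≠ 0) :
    fderiv ℝ (fun z => fderiv ℝ (fun w => Real.sqrt (tnormSq (f w))) z e) y e =
      (pip (fderiv ℝ f y e) (fderiv ℝ f y e)
        + pip (f y) (fderiv ℝ (fun z => fderiv ℝ f z e) y e)) / Real.sqrt (tnormSq (f y))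
      - (pip (f y) (fderiv ℝ f y e)) ^ 2 / (Real.sqrt (tnormSq (f y)) * pip (f y) (f y)) := by
  have hd : Differentiable ℝ f := hf.differentiable (by norm_num)
  have hd2 : Differentiable ℝ (fun z => fderiv ℝ f z e) := by
    have : ContDiff ℝ 1 (fun z => fderiv ℝ f z e) :=
      (hf.fderiv_right (m := 1) (by norm_num)).clm_apply contDiff_const
    exact this.differentiable (by norm_num)
  have hev : (fun z => fderiv ℝ (fun w => Real.sqrt (tnormSq (f w))) z e) =ᶠ[nhds y]
      fun z => pip (f z) (fderiv ℝ f z e) / Real.sqrt (tnormSq (f z)) := by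
    have : ∀ᶠ z in nhds y, f z ≠ 0 := hd.continuous.continuousAt.eventually_ne h0
    filter_upwards [this] with z hz
    obtain ⟨l, hl, hl'⟩ := fderiv_norm f z _ (hd z).hasFDerivAt hz
    rw [hl.fderiv, hl']
  rw [hev.fderiv_eq]
  obtain ⟨l, hl, hl'⟩ := fderiv_norm f y _ (hd y).hasFDerivAt h0
  obtain ⟨m, hm, hm'⟩ := hasFDerivAt_pip f (fun z => fderiv ℝ f z e) y _ _ (hd y).hasFDerivAt
    (hd2 y).hasFDerivAt
  have hp := pip_self_pos _ h0
  have hs : 0 < Real.sqrt (tnormSq (f y)) := Real.sqrt_pos.2 hp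
  have hss : Real.sqrt (tnormSq (f y)) ^ 2 = pip (f y) (f y) := Real.sq_sqrt hp.le
  rw [fderiv_quot _ _ y _ _ hm hl hs.ne']
  rw [hl', hm']
  rw [← hss]
  field_simp

end Deriv

lemma lapM_eq {n : ℕ} (f : En n → Fin n → Mat n) (y : En n) (hf : ContDiff ℝ 2 f) :
    (fun j => lapM (fun z => f z j) y) =
      ∑ i, fderiv ℝ (fun z => fderiv ℝ f z (EuclideanSpace.single i 1)) y
        (EuclideanSpace.single i 1) := by
  have hd : Differentiable ℝ f := hf.differentiable (by norm_num)
  funext j μ ν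
  simp only [lapM, lapS, pder, Finset.sum_apply]
  refine Finset.sum_congr rfl fun i _ => ?_
  have hd2 : Differentiable ℝ (fun z => fderiv ℝ f z (EuclideanSpace.single i (1:ℝ))) := by
    have : ContDiff ℝ 1 (fun z => fderiv ℝ f z (EuclideanSpace.single i (1:ℝ))) :=
      (hf.fderiv_right (m := 1) (by norm_num)).clm_apply contDiff_const
    exact this.differentiable (by norm_num)
  rw [← comp_fderiv _ _ _ (hd2 y)]
  simp only [comp_fderiv f _ _ (hd _)]

lemma pderM_eq {n : ℕ} (f : En n → Fin n → Mat n) (y : En n) (hf : ContDiff ℝ 2 f) (i j : Fin n) :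
    pderM i (fun z => f z j) y = fderiv ℝ f y (EuclideanSpace.single i 1) j := by
  have hd : Differentiable ℝ f := hf.differentiable (by norm_num)
  funext μ ν
  simp only [pderM, pder]
  exact comp_fderiv f _ _ (hd _) j μ ν

lemma Lop_eq {n : ℕ} (f : En n → Fin n → Mat n) (y : En n) (hf : ContDiff ℝ 2 f) :
    Lop f y = (∑ i, fderiv ℝ (fun z => fderiv ℝ f z (EuclideanSpace.single i 1)) y
        (EuclideanSpace.single i 1))
      - (1 / 2 : ℝ) • (∑ i, y i • fderiv ℝ f y (EuclideanSpace.single i 1))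
      - (1 / 2 : ℝ) • f y
      + (2 : ℝ) • (∑ i, adT (Wc i y) (fderiv ℝ f y (EuclideanSpace.single i 1)))
      + (∑ i, adT (Wc i y) (adT (Wc i y) (f y)))
      + (2 : ℝ) • (fun j => ∑ i, brkt (f y i) (Fc i j y)) := by
  rw [← lapM_eq f y hf]
  funext j
  simp only [Lop, pderM_eq f y hf, Pi.add_apply, Pi.sub_apply, Pi.smul_apply, Finset.sum_apply, adT]

end Helpers

/-- Pointwise differential inequality for the norm of a solution of the linearized flow:
there is `C₀ = C₀(n)` such that if `u, h` are smooth on `ℝⁿ × I` (`I` open) and satisfy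
`∂_τ u_j = (Lu)_j + h_j`, then at every point with `u(y,τ) ≠ 0`,
`∂_τ‖u‖_F − Δ_y‖u‖_F + (1/2)Σ_i y_i ∂_i‖u‖_F + (1/2)‖u‖_F ≤ ‖h‖_F + (C₀/(1+|y|²))‖u‖_F`. -/
theorem norm_differential_inequality (n : ℕ) (hn : 5 ≤ n) (hn' : n ≤ 9) :
    ∃ C₀ : ℝ, ∀ (I : Set ℝ), IsOpen I →
      ∀ u h : En n → ℝ → Fin n → Mat n,
        ContDiffOn ℝ (⊤ : ℕ∞) (fun p : En n × ℝ => u p.1 p.2) (Set.univ ×ˢ I) →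
        ContDiffOn ℝ (⊤ : ℕ∞) (fun p : En n × ℝ => h p.1 p.2) (Set.univ ×ˢ I) →
        (∀ (y : En n) (τ : ℝ), τ ∈ I → ∀ j,
          deriv (fun s => u y s j) τ = Lop (fun z k => u z τ k) y j + h y τ j) →
        ∀ (y : En n) (τ : ℝ), τ ∈ I → u y τ ≠ 0 →
          deriv (fun s => Real.sqrt (tnormSq (u y s))) τ
            - lapS (fun z => Real.sqrt (tnormSq (u z τ))) y
            + (1 / 2) * (∑ i, y i * pder i (fun z => Real.sqrt (tnormSq (u z τ))) y)
            + (1 / 2) * Real.sqrt (tnormSq (u y τ))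
          ≤ Real.sqrt (tnormSq (h y τ))
            + (C₀ / (1 + ‖y‖ ^ 2)) * Real.sqrt (tnormSq (u y τ)) := by
  obtain ⟨K, hK⟩ := Fc_bound (n := n) hn hn'
  refine ⟨4 * (n : ℝ) ^ 5 * K, ?_⟩
  intro I hI u h hu _ hpde y τ hτ h0
  set f : En n → Fin n → Mat n := fun z => u z τ with hfdef
  have hnhd : ∀ z : En n, (Set.univ ×ˢ I : Set (En n × ℝ)) ∈ nhds (z, τ) := fun z =>
    (isOpen_univ.prod hI).mem_nhds ⟨trivial, hτ⟩
  have hf : ContDiff ℝ 2 f := by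
    rw [contDiff_iff_contDiffAt]
    intro z
    have h1 : ContDiffAt ℝ 2 (fun p : En n × ℝ => u p.1 p.2) (z, τ) :=
      (hu.contDiffAt (hnhd z)).of_le (by exact WithTop.coe_le_coe.2 (le_top (a := (2 : ℕ∞))))
    exact h1.comp z (f := fun z : En n => (z, τ)) (contDiffAt_id.prodMk contDiffAt_const)
  have hd : Differentiable ℝ f := hf.differentiable (by norm_num)
  have ht : DifferentiableAt ℝ (fun s => u y s) τ := by
    have h1 : DifferentiableAt ℝ (fun p : En n × ℝ => u p.1 p.2) (y, τ) :=
      (hu.contDiffAt (hnhd y)).differentiableAt (by simp)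
    exact h1.comp τ (f := fun s : ℝ => (y, s)) (by fun_prop)
  have hdt : fderiv ℝ (fun s => u y s) τ 1 = Lop f y + h y τ := by
    funext j
    have h1 := hpde y τ hτ j
    have h2 : HasDerivAt (fun s => u y s) (fderiv ℝ (fun s => u y s) τ 1) τ := ht.hasDerivAt
    rw [hasDerivAt_pi] at h2
    rw [← (h2 j).deriv, h1]
    rfl
  have hfy : f y ≠ 0 := h0
  have hp : 0 < pip (f y) (f y) := pip_self_pos _ hfy
  set N := Real.sqrt (tnormSq (f y)) with hN
  have hNpos : 0 < N := Real.sqrt_pos.2 hp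
  have hNN : N ^ 2 = pip (f y) (f y) := Real.sq_sqrt hp.le
  set e : Fin n → En n := fun i => EuclideanSpace.single i 1 with he
  set p : Fin n → Fin n → Mat n := fun i => fderiv ℝ f y (e i) with hpp
  set q : Fin n → Fin n → Mat n := fun i => fderiv ℝ (fun z => fderiv ℝ f z (e i)) y (e i) with hq
  have T1 : deriv (fun s => Real.sqrt (tnormSq (u y s))) τ = pip (f y) (Lop f y + h y τ) / N := by
    obtain ⟨l, hl, hl'⟩ := fderiv_norm (fun s => u y s) τ _ ht.hasFDerivAt h0
    rw [hl.hasDerivAt.deriv, hl', hdt]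
  have T2 : lapS (fun z => Real.sqrt (tnormSq (u z τ))) y =
      ∑ i, ((pip (p i) (p i) + pip (f y) (q i)) / N
        - pip (f y) (p i) ^ 2 / (N * pip (f y) (f y))) := by
    unfold lapS pder
    exact Finset.sum_congr rfl fun i _ => fderiv_norm2 f y (e i) hf hfy
  have T3 : ∀ i, pder i (fun z => Real.sqrt (tnormSq (u z τ))) y = pip (f y) (p i) / N := by
    intro i
    obtain ⟨l, hl, hl'⟩ := fderiv_norm f y _ (hd y).hasFDerivAt hfy
    unfold pder
    rw [hl.fderiv, hl']
  have T4 : pip (f y) (Lop f y) = (∑ i, pip (f y) (q i))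
      - (1 / 2) * (∑ i, y i * pip (f y) (p i)) - (1 / 2) * pip (f y) (f y)
      + 2 * (∑ i, pip (f y) (adT (Wc i y) (p i)))
      + (∑ i, pip (f y) (adT (Wc i y) (adT (Wc i y) (f y))))
      + 2 * pip (f y) (fun j => ∑ i, brkt (f y i) (Fc i j y)) := by
    rw [Lop_eq f y hf]
    simp only [pip_add, pip_sub, pip_smul, pip_sum]
    rfl
  have hR := R_bound (f y) (fun i j => Fc i j y) _ (hK y)
  have hh : pip (f y) (h y τ) ≤ N * Real.sqrt (tnormSq (h y τ)) := by
    have h1 := Real.abs_le_sqrt (pip_cs (f y) (h y τ))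
    rw [Real.sqrt_mul hp.le] at h1
    exact (le_abs_self _).trans h1
  have hkato : 2 * (∑ i, pip (f y) (adT (Wc i y) (p i)))
      + (∑ i, pip (f y) (adT (Wc i y) (adT (Wc i y) (f y))))
      ≤ ∑ i, (pip (p i) (p i) - pip (f y) (p i) ^ 2 / pip (f y) (f y)) := by
    rw [Finset.mul_sum, ← Finset.sum_add_distrib]
    exact Finset.sum_le_sum fun i _ => kato_alg _ (skew_Wc i y) _ _ hp
  have T2' : lapS (fun z => Real.sqrt (tnormSq (u z τ))) y * N =
      (∑ i, (pip (p i) (p i) - pip (f y) (p i) ^ 2 / pip (f y) (f y)))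
        + ∑ i, pip (f y) (q i) := by
    rw [T2, Finset.sum_mul, ← Finset.sum_add_distrib]
    refine Finset.sum_congr rfl fun i _ => ?_
    have := hp.ne'
    field_simp
    ring
  have T3' : (∑ i, y i * pder i (fun z => Real.sqrt (tnormSq (u z τ))) y) * N
      = ∑ i, y i * pip (f y) (p i) := by
    rw [Finset.sum_mul]
    refine Finset.sum_congr rfl fun i _ => ?_
    rw [T3]; field_simp
  have T1' : deriv (fun s => Real.sqrt (tnormSq (u y s))) τ * N
      = pip (f y) (Lop f y) + pip (f y) (h y τ) := by
    rw [T1, pip_add]; field_simp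
  have hC : 4 * (n : ℝ) ^ 5 * K / (1 + ‖y‖ ^ 2) * pip (f y) (f y)
      = 2 * (2 * (n : ℝ) ^ 5 * (K / (1 + ‖y‖ ^ 2)) * pip (f y) (f y)) := by ring
  refine le_of_mul_le_mul_right ?_ hNpos
  change (_ - _ + _ + (1 / 2) * N) * N ≤ (_ + _ * N) * N
  have hfin : (deriv (fun s => Real.sqrt (tnormSq (u y s))) τ) * N
        - lapS (fun z => Real.sqrt (tnormSq (u z τ))) y * N
        + (1 / 2) * ((∑ i, y i * pder i (fun z => Real.sqrt (tnormSq (u z τ))) y) * N)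
        + (1 / 2) * N ^ 2
      ≤ N * Real.sqrt (tnormSq (h y τ)) + 4 * (n : ℝ) ^ 5 * K / (1 + ‖y‖ ^ 2) * N ^ 2 := by
    rw [T1', T2', T3', hNN, hC, T4]
    linarith
  refine le_trans (le_of_eq ?_) (hfin.trans (le_of_eq ?_)) <;> ring
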